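/- Let P be a finite simple graph and let S be an independent set of non-isolated vertices of P such that (i) |S| − |N(S)| ≥ |S'| − |N(S')| (as integers) for every independent set S' of non-isolated vertices of P, and (ii) |S| ≥ |S'| for every independent set S' of non-isolated vertices achieving |S'| − |N(S')| = |S| − |N(S)|. Let R = V(P) \ N[S] and assume that every vertex of R has at least one neighbor in R. Then for every vertex v ∈ R and every subset X ⊆ R \ {v}, the number of vertices u ∈ R \ ({v} ∪ X) that have no neighbor in R \ ({v} ∪ X) is at most |X|. -/

import Mathlib

open Finset

/-! Adjoining to `S` a nonempty finite set `T` of vertices isolated in `G[R \ Y]` keeps it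
independent, since no edge joins `S` to `R`, and enlarges `N(S)` by vertices of `Y` only. As `S`
is a largest maximizer of `|S| - |N(S)|`, the larger set `S ∪ T` is not a maximizer, so `T` has
strictly fewer elements than `Y`. For `Y = {v} ∪ X` this reads `|T| ≤ |X|`. -/

section

variable {V : Type*}

/-- The isolated vertices of the subgraph of `G` induced on `A`, as a set of vertices of `G`. -/
def isolatedVerts (G : SimpleGraph V) (A : Set V) : Set V :=
  {u ∈ A | ∀ w ∈ A, ¬ G.Adj u w}

/-- An independent set of non-isolated vertices; `G.support` is the set of all vertices that are
not isolated. -/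
structure IsNonisolatedIndepSet (G : SimpleGraph V) (S : Set V) : Prop where
  isIndepSet : G.IsIndepSet S
  subset_support : S ⊆ G.support

variable [DecidableEq V] (G : SimpleGraph V) [G.LocallyFinite]

/-- The open neighborhood `N(S)` of a finite set of vertices. -/
def openNeighborFinset (S : Finset V) : Finset V :=
  S.biUnion fun s => G.neighborFinset s

/-- The difference `|S| - |N(S)|`, as an integer. -/
def neighborDiff (S : Finset V) : ℤ :=
  #S - #(openNeighborFinset G S)

/-- The set `V(G) \ N[S]` of vertices outside the closed neighborhood of `S`. -/
def outerVerts (S : Finset V) : Set V :=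
  (↑(S ∪ openNeighborFinset G S))ᶜ

/-- A largest one among the finite independent sets of non-isolated vertices that maximize
`|S| - |N(S)|`. -/
structure IsMaximumCritical (S : Finset V) : Prop where
  isNonisolatedIndepSet : IsNonisolatedIndepSet G S
  neighborDiff_le (T : Finset V) : IsNonisolatedIndepSet G T → neighborDiff G T ≤ neighborDiff G S
  card_le (T : Finset V) :
    IsNonisolatedIndepSet G T → neighborDiff G T = neighborDiff G S → #T ≤ #S

end

section

variable {V : Type*} {G : SimpleGraph V}

theorem isIndepSet_isolatedVerts (A : Set V) : G.IsIndepSet (isolatedVerts G A) :=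
  fun _ hu _ hw _ => hu.2 _ hw.1

theorem isNonisolatedIndepSet_iff {S : Set V} :
    IsNonisolatedIndepSet G S ↔
      (∀ u ∈ S, ∀ v ∈ S, ¬ G.Adj u v) ∧ ∀ v ∈ S, ∃ w, G.Adj v w :=
  ⟨fun h => ⟨fun _ hu _ hv huv => h.isIndepSet hu hv huv.ne huv, h.subset_support⟩,
    fun h => ⟨fun u hu v hv _ => h.1 u hu v hv, h.2⟩⟩

theorem IsNonisolatedIndepSet.union {S T : Set V} (hS : IsNonisolatedIndepSet G S)
    (hT : IsNonisolatedIndepSet G T) (hST : ∀ s ∈ S, ∀ t ∈ T, ¬ G.Adj s t) :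
    IsNonisolatedIndepSet G (S ∪ T) where
  isIndepSet := Set.pairwise_union.2 ⟨hS.isIndepSet, hT.isIndepSet,
    fun s hs t ht _ => ⟨hST s hs t ht, fun h => hST s hs t ht h.symm⟩⟩
  subset_support := Set.union_subset hS.subset_support hT.subset_support

theorem encard_le_of_forall_finset_card_le {α : Type*} {A : Set α} {n : ℕ}
    (h : ∀ T : Finset α, ↑T ⊆ A → #T ≤ n) : A.encard ≤ n := by
  by_contra! hlt
  obtain ⟨T, hTA, hT⟩ := Set.exists_subset_encard_eq (Order.add_one_le_of_lt hlt)
  lift T to Finset α using Set.finite_of_encard_eq_coe hT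
  have hcard : #T = n + 1 := by
    rw [Set.encard_coe_eq_coe_finsetCard] at hT
    exact_mod_cast hT
  exact absurd (h T hTA) (by omega)

theorem encard_isolatedVerts_coe (A : Finset V) [DecidablePred fun u => ∀ w ∈ A, ¬ G.Adj u w] :
    (isolatedVerts G ↑A).encard = #{u ∈ A | ∀ w ∈ A, ¬ G.Adj u w} := by
  rw [← Set.encard_coe_eq_coe_finsetCard, coe_filter]
  rfl

variable [DecidableEq V] [G.LocallyFinite] {S T Y : Finset V}

theorem mem_openNeighborFinset {x : V} : x ∈ openNeighborFinset G S ↔ ∃ s ∈ S, G.Adj s x := by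
  simp only [openNeighborFinset, mem_biUnion, SimpleGraph.mem_neighborFinset]

theorem openNeighborFinset_union :
    openNeighborFinset G (S ∪ T) = openNeighborFinset G S ∪ openNeighborFinset G T :=
  union_biUnion

theorem mem_outerVerts {x : V} : x ∈ outerVerts G S ↔ x ∉ S ∧ x ∉ openNeighborFinset G S := by
  simp only [outerVerts, Set.mem_compl_iff, mem_coe, mem_union, not_or]

theorem coe_univ_sdiff_union_openNeighborFinset [Fintype V] :
    ↑(univ \ (S ∪ openNeighborFinset G S)) = outerVerts G S := by
  rw [← compl_eq_univ_sdiff, coe_compl, outerVerts]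

theorem disjoint_of_subset_outerVerts (hT : ↑T ⊆ outerVerts G S) : Disjoint S T :=
  disjoint_right.2 fun _ hx => (mem_outerVerts.1 (hT hx)).1

theorem not_adj_of_mem_outerVerts {s x : V} (hs : s ∈ S) (hx : x ∈ outerVerts G S) :
    ¬ G.Adj s x :=
  fun h => (mem_outerVerts.1 hx).2 (mem_openNeighborFinset.2 ⟨s, hs, h⟩)

theorem openNeighborFinset_subset_of_subset_isolatedVerts
    (hT : ↑T ⊆ isolatedVerts G (outerVerts G S \ Y)) :
    openNeighborFinset G T ⊆ openNeighborFinset G S ∪ Y := by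
  intro x hx
  obtain ⟨t, ht, htx⟩ := mem_openNeighborFinset.1 hx
  by_contra hxNY
  obtain ⟨hxN, hxY⟩ := not_or.1 (mt mem_union.2 hxNY)
  have hxS : x ∉ S := fun hxS => not_adj_of_mem_outerVerts hxS (hT ht).1.1 htx.symm
  exact (hT ht).2 x ⟨mem_outerVerts.2 ⟨hxS, hxN⟩, hxY⟩ htx

theorem card_openNeighborFinset_union_le (hT : ↑T ⊆ isolatedVerts G (outerVerts G S \ Y)) :
    #(openNeighborFinset G (S ∪ T)) ≤ #(openNeighborFinset G S) + #Y := by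
  rw [openNeighborFinset_union]
  exact (card_le_card <| union_subset subset_union_left <|
    openNeighborFinset_subset_of_subset_isolatedVerts hT).trans (card_union_le _ _)

namespace IsMaximumCritical

theorem of_forall (hInd : ∀ u ∈ S, ∀ v ∈ S, ¬ G.Adj u v) (hNonIso : ∀ v ∈ S, ∃ w, G.Adj v w)
    (hMax : ∀ T : Finset V, (∀ u ∈ T, ∀ v ∈ T, ¬ G.Adj u v) → (∀ v ∈ T, ∃ w, G.Adj v w) →
      neighborDiff G T ≤ neighborDiff G S)
    (hMaxCard : ∀ T : Finset V, (∀ u ∈ T, ∀ v ∈ T, ¬ G.Adj u v) → (∀ v ∈ T, ∃ w, G.Adj v w) →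
      neighborDiff G T = neighborDiff G S → #T ≤ #S) :
    IsMaximumCritical G S where
  isNonisolatedIndepSet := isNonisolatedIndepSet_iff.2 ⟨hInd, hNonIso⟩
  neighborDiff_le T hT := (isNonisolatedIndepSet_iff.1 hT).elim (hMax T)
  card_le T hT := (isNonisolatedIndepSet_iff.1 hT).elim (hMaxCard T)

theorem neighborDiff_lt_of_card_lt (hS : IsMaximumCritical G S) (hT : IsNonisolatedIndepSet G T)
    (hST : #S < #T) : neighborDiff G T < neighborDiff G S :=
  (hS.neighborDiff_le T hT).lt_of_ne fun h => (hS.card_le T hT h).not_gt hST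

theorem card_lt_of_subset_isolatedVerts (hS : IsMaximumCritical G S)
    (hR : outerVerts G S ⊆ G.support) (hT : ↑T ⊆ isolatedVerts G (outerVerts G S \ Y))
    (hT₀ : T.Nonempty) : #T < #Y := by
  have hTR : ↑T ⊆ outerVerts G S := fun _ ht => (hT ht).1.1
  have hTind : IsNonisolatedIndepSet G T :=
    ⟨(isIndepSet_isolatedVerts _).mono hT, hTR.trans hR⟩
  have hSTind : IsNonisolatedIndepSet G ↑(S ∪ T) := by
    rw [coe_union]
    exact hS.isNonisolatedIndepSet.union hTind
      fun s hs t ht => not_adj_of_mem_outerVerts hs (hTR ht)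
  have hcard : #(S ∪ T) = #S + #T := card_union_of_disjoint (disjoint_of_subset_outerVerts hTR)
  have hdiff : neighborDiff G (S ∪ T) < neighborDiff G S :=
    hS.neighborDiff_lt_of_card_lt hSTind (by have := hT₀.card_pos; omega)
  have hN := card_openNeighborFinset_union_le hT
  unfold neighborDiff at hdiff
  omega

end IsMaximumCritical

end

theorem stmt6_general {V : Type*} [DecidableEq V] (G : SimpleGraph V) [G.LocallyFinite]
    {S : Finset V} (hS : IsMaximumCritical G S) (hR : outerVerts G S ⊆ G.support)
    (v : V) (X : Finset V) :
    (isolatedVerts G (outerVerts G S \ insert v ↑X)).encard ≤ #X := by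
  refine encard_le_of_forall_finset_card_le fun T hT => ?_
  rw [← coe_insert] at hT
  obtain rfl | hT₀ := T.eq_empty_or_nonempty
  · simp
  · exact Nat.lt_succ_iff.1 <|
      (hS.card_lt_of_subset_isolatedVerts hR hT hT₀).trans_le (card_insert_le v X)

/-- With `S` an independent set of non-isolated vertices maximizing
`|S| − |N(S)|`, and of maximum cardinality among such maximizers, let
`R = V(P) \ N[S]` and assume every vertex of `R` has a neighbor in `R`. Then for every
`v ∈ R` and every `X ⊆ R \ {v}`, the number of vertices of `R \ ({v} ∪ X)` having no
neighbor in `R \ ({v} ∪ X)` is at most `|X|`. -/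
theorem stmt6 {V : Type*} [Fintype V] [DecidableEq V]
    (P : SimpleGraph V) [DecidableRel P.Adj] (S : Finset V)
    (hInd : ∀ u ∈ S, ∀ v ∈ S, ¬ P.Adj u v)
    (hNonIso : ∀ v ∈ S, ∃ w, P.Adj v w)
    (hMax : ∀ S' : Finset V, (∀ u ∈ S', ∀ v ∈ S', ¬ P.Adj u v) →
      (∀ v ∈ S', ∃ w, P.Adj v w) →
      (S'.card : ℤ) - ((S'.biUnion (fun s => P.neighborFinset s)).card : ℤ) ≤
        (S.card : ℤ) - ((S.biUnion (fun s => P.neighborFinset s)).card : ℤ))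
    (hMaxCard : ∀ S' : Finset V, (∀ u ∈ S', ∀ v ∈ S', ¬ P.Adj u v) →
      (∀ v ∈ S', ∃ w, P.Adj v w) →
      (S'.card : ℤ) - ((S'.biUnion (fun s => P.neighborFinset s)).card : ℤ) =
        (S.card : ℤ) - ((S.biUnion (fun s => P.neighborFinset s)).card : ℤ) →
      S'.card ≤ S.card)
    (R : Finset V)
    (hR : R = Finset.univ \ (S ∪ S.biUnion (fun s => P.neighborFinset s)))
    (hRnoIso : ∀ v ∈ R, ∃ w ∈ R, P.Adj v w)
    (v : V) (hv : v ∈ R) (X : Finset V) (hX : X ⊆ R \ {v}) :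
    ((R \ (insert v X)).filter
        (fun u => ∀ w ∈ R \ (insert v X), ¬ P.Adj u w)).card ≤ X.card := by
  have hRo : (R : Set V) = outerVerts P S := hR ▸ coe_univ_sdiff_union_openNeighborFinset
  have hle := stmt6_general P (.of_forall hInd hNonIso hMax hMaxCard)
    (hRo ▸ fun u hu => (hRnoIso u hu).imp fun _ h => h.2) v X
  rwa [← hRo, ← coe_insert, ← coe_sdiff, encard_isolatedVerts_coe, Nat.cast_le] at hle
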